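/- Let G be a finite abelian group with r(G) = r, and let G₀ ⊆ G be a minimal non-half-factorial LCN-set with min Δ(G₀) = max Δ*(G). Let S be the zero-sum sequence over G₀ given by the multiset containing each g ∈ G₀ with multiplicity ord(g). Then every atom A over G₀ with cross number k(A) > 1 satisfies k(A) < r, and the multiset difference S − A is again an atom over G₀. -/

import Mathlib

open Multiset

section Defs

variable {G : Type*} [AddCommGroup G]

/-- `S` is a zero-sum sequence over `G₀`: a multiset with entries in `G₀` and sum `0`. -/
def IsZeroSumSeq (G₀ : Set G) (S : Multiset G) : Prop :=
  (∀ x ∈ S, x ∈ G₀) ∧ S.sum = 0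

/-- `S` is an atom over `G₀`: a nonempty zero-sum sequence over `G₀` that is not the
union of two nonempty zero-sum sequences over `G₀`. -/
def IsAtomSeq (G₀ : Set G) (S : Multiset G) : Prop :=
  IsZeroSumSeq G₀ S ∧ S ≠ 0 ∧
    ∀ A B : Multiset G, IsZeroSumSeq G₀ A → IsZeroSumSeq G₀ B →
      A ≠ 0 → B ≠ 0 → S ≠ A + B

/-- The set of lengths of `B`: all `k` such that `B` is a union of `k` atoms over `G₀`. -/
def LengthSet (G₀ : Set G) (B : Multiset G) : Set ℕ :=
  {k | ∃ l : Multiset (Multiset G), Multiset.card l = k ∧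
      (∀ A ∈ l, IsAtomSeq G₀ A) ∧ l.sum = B}

/-- The set of successive distances of a set of naturals. -/
def DeltaOf (L : Set ℕ) : Set ℕ :=
  {d | ∃ x ∈ L, ∃ y ∈ L, x < y ∧ y - x = d ∧ ∀ z ∈ L, ¬(x < z ∧ z < y)}

/-- The set of distances `Δ(G₀)`. -/
def DeltaSet (G₀ : Set G) : Set ℕ :=
  {d | ∃ B : Multiset G, IsZeroSumSeq G₀ B ∧ B ≠ 0 ∧ d ∈ DeltaOf (LengthSet G₀ B)}

/-- `G₀` is half-factorial if `Δ(G₀) = ∅`. -/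
def IsHalfFactorialSet (G₀ : Set G) : Prop := DeltaSet G₀ = ∅

/-- `G₀` is minimal non-half-factorial if `Δ(G₀) ≠ ∅` and every proper subset is
half-factorial. -/
def IsMinNonHalfFactorial (G₀ : Set G) : Prop :=
  (DeltaSet G₀).Nonempty ∧ ∀ G₁ : Set G, G₁ ⊂ G₀ → DeltaSet G₁ = ∅

/-- The cross number `k(S) = Σ 1/ord(g)` of a multiset over `G`. -/
noncomputable def crossNumber (S : Multiset G) : ℚ :=
  (S.map (fun g => ((addOrderOf g : ℚ))⁻¹)).sum

/-- `G₀` is an LCN-set if every atom over `G₀` has cross number at least 1. -/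
def IsLCNSet (G₀ : Set G) : Prop :=
  ∀ U : Multiset G, IsAtomSeq G₀ U → 1 ≤ crossNumber U

/-- A subset of `G \ {0}` is independent if any integral linear relation on its elements
has all summands zero. -/
def IsIndependentSet (E : Set G) : Prop :=
  (0 : G) ∉ E ∧ ∀ s : Finset G, ↑s ⊆ E → ∀ f : G → ℤ,
    (∑ e ∈ s, f e • e) = 0 → ∀ e ∈ s, f e • e = 0

/-- `d` is a greatest common divisor of the set `S` of naturals. -/
def IsSetGcd (S : Set ℕ) (d : ℕ) : Prop :=
  (∀ s ∈ S, d ∣ s) ∧ ∀ e : ℕ, (∀ s ∈ S, e ∣ s) → e ∣ d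

end Defs

/-- The set of minimal distances `Δ*(G)`. -/
def DeltaStar (G : Type*) [AddCommGroup G] : Set ℕ :=
  {d | ∃ G₀ : Set G, (DeltaSet G₀).Nonempty ∧ d = sInf (DeltaSet G₀)}

/-- The `p`-rank of a finite abelian group: `log_p` of the order of the `p`-torsion
subgroup `{x | p • x = 0}`. -/
noncomputable def pRank (G : Type*) [AddCommGroup G] (p : ℕ) : ℕ :=
  Nat.log p (Nat.card {x : G // p • x = 0})

/-- The rank of a finite abelian group: the maximum of the `p`-ranks over all primes. -/
noncomputable def rankG (G : Type*) [AddCommGroup G] : ℕ :=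
  sSup {r : ℕ | ∃ p : ℕ, p.Prime ∧ r = pRank G p}


set_option linter.unusedSectionVars false

section BasicPart

variable {G : Type*} [AddCommGroup G]

lemma crossNumber_add (A B : Multiset G) :
    crossNumber (A + B) = crossNumber A + crossNumber B := by
  simp [crossNumber]

lemma crossNumber_zero : crossNumber (0 : Multiset G) = 0 := by
  simp [crossNumber]

lemma crossNumber_sum (l : Multiset (Multiset G)) :
    crossNumber l.sum = (l.map crossNumber).sum := by
  induction l using Multiset.induction_on with
  | empty => simp [crossNumber_zero]
  | cons a s ih => simp [crossNumber_add, ih]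

lemma crossNumber_sum_of_one (l : Multiset (Multiset G)) (h : ∀ A ∈ l, crossNumber A = 1) :
    crossNumber l.sum = Multiset.card l := by
  rw [crossNumber_sum, Multiset.map_congr rfl h]
  simp

lemma card_le_crossNumber_sum (l : Multiset (Multiset G)) (h : ∀ A ∈ l, 1 ≤ crossNumber A) :
    (Multiset.card l : ℚ) ≤ crossNumber l.sum := by
  induction l using Multiset.induction_on with
  | empty => simp [crossNumber_zero]
  | cons a s ih =>
    have h1 := h a (by simp)
    have h2 := ih (fun A hA => h A (by simp [hA]))
    simp only [Multiset.card_cons, Multiset.sum_cons, crossNumber_add]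
    push_cast
    linarith

lemma crossNumber_nonneg (A : Multiset G) : 0 ≤ crossNumber A := by
  unfold crossNumber
  apply Multiset.sum_nonneg
  intro x hx
  rw [Multiset.mem_map] at hx
  obtain ⟨g, _, rfl⟩ := hx
  positivity

lemma IsZeroSumSeq.add {G₀ : Set G} {A B : Multiset G} (hA : IsZeroSumSeq G₀ A)
    (hB : IsZeroSumSeq G₀ B) : IsZeroSumSeq G₀ (A + B) := by
  refine ⟨fun x hx => ?_, by simp [hA.2, hB.2]⟩
  rcases Multiset.mem_add.1 hx with h | h
  · exact hA.1 x h
  · exact hB.1 x h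

lemma isZeroSumSeq_zero (G₀ : Set G) : IsZeroSumSeq G₀ (0 : Multiset G) := by
  simp [IsZeroSumSeq]

lemma isZeroSumSeq_sum {G₀ : Set G} (l : Multiset (Multiset G))
    (h : ∀ A ∈ l, IsZeroSumSeq G₀ A) : IsZeroSumSeq G₀ l.sum := by
  induction l using Multiset.induction_on with
  | empty => simpa using isZeroSumSeq_zero G₀
  | cons a s ih =>
    rw [Multiset.sum_cons]
    exact (h a (by simp)).add (ih fun A hA => h A (by simp [hA]))

/-- complement of a zero-sum subsequence -/
lemma IsZeroSumSeq.right {G₀ : Set G} {A B C : Multiset G} (hC : IsZeroSumSeq G₀ C)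
    (hA : A.sum = 0) (h : C = A + B) : IsZeroSumSeq G₀ B := by
  subst h
  refine ⟨fun x hx => hC.1 x (by simp [hx]), ?_⟩
  have := hC.2
  simpa [hA] using this

lemma IsZeroSumSeq.left {G₀ : Set G} {A B C : Multiset G} (hC : IsZeroSumSeq G₀ C)
    (hA : A.sum = 0) (h : C = A + B) : IsZeroSumSeq G₀ A := by
  subst h
  exact ⟨fun x hx => hC.1 x (by simp [hx]), hA⟩

lemma IsAtomSeq.eq_of_le {G₀ : Set G} {A B : Multiset G} (hA : IsAtomSeq G₀ A)
    (hB : B.sum = 0) (hB0 : B ≠ 0) (hle : B ≤ A) : B = A := by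
  obtain ⟨C, rfl⟩ := Multiset.le_iff_exists_add.1 hle
  by_contra hne
  have hC0 : C ≠ 0 := by
    rintro rfl
    simp at hne
  exact hA.2.2 B C (hA.1.left hB rfl) (hA.1.right hB rfl) hB0 hC0 rfl

lemma isAtomSeq_of_le {G₀ : Set G} {A : Multiset G} (hz : IsZeroSumSeq G₀ A) (h0 : A ≠ 0)
    (h : ∀ B, B ≤ A → B.sum = 0 → B ≠ 0 → B = A) : IsAtomSeq G₀ A := by
  refine ⟨hz, h0, ?_⟩
  rintro B C hB hC hB0 hC0 rfl
  have := h B (by simp) hB.2 hB0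
  apply hC0
  simpa using this

lemma IsAtomSeq.mono {G₀ G₁ : Set G} {A : Multiset G} (hA : IsAtomSeq G₀ A)
    (h : ∀ x ∈ A, x ∈ G₁) : IsAtomSeq G₁ A :=
  isAtomSeq_of_le ⟨h, hA.1.2⟩ hA.2.1 fun _ hB hs h0 => hA.eq_of_le hs h0 hB

lemma exists_factorization {G₀ : Set G} (B : Multiset G) (hB : IsZeroSumSeq G₀ B) :
    ∃ l : Multiset (Multiset G), (∀ A ∈ l, IsAtomSeq G₀ A) ∧ l.sum = B := by
  induction hn : Multiset.card B using Nat.strong_induction_on generalizing B with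
  | _ n ih =>
    by_cases h0 : B = 0
    · exact ⟨0, by simp, by simp [h0]⟩
    by_cases hat : IsAtomSeq G₀ B
    · exact ⟨{B}, by simpa using hat, by simp⟩
    · have : ∃ C D : Multiset G, IsZeroSumSeq G₀ C ∧ IsZeroSumSeq G₀ D ∧ C ≠ 0 ∧ D ≠ 0 ∧
          B = C + D := by
        by_contra hcon
        push Not at hcon
        exact hat ⟨hB, h0, hcon⟩
      obtain ⟨C, D, hC, hD, hC0, hD0, rfl⟩ := this
      have h1 : 0 < Multiset.card C := Multiset.card_pos.2 hC0
      have h2 : 0 < Multiset.card D := Multiset.card_pos.2 hD0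
      rw [Multiset.card_add] at hn
      obtain ⟨l, hl, hl'⟩ := ih (Multiset.card C) (by omega) C hC rfl
      obtain ⟨m, hm, hm'⟩ := ih (Multiset.card D) (by omega) D hD rfl
      refine ⟨l + m, ?_, by simp [hl', hm']⟩
      intro A hA
      rcases Multiset.mem_add.1 hA with h | h
      · exact hl A h
      · exact hm A h

lemma lengthSet_add {G₀ : Set G} {A B : Multiset G} {x y : ℕ} (hx : x ∈ LengthSet G₀ A)
    (hy : y ∈ LengthSet G₀ B) : x + y ∈ LengthSet G₀ (A + B) := by
  obtain ⟨l, rfl, hl, rfl⟩ := hx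
  obtain ⟨m, rfl, hm, rfl⟩ := hy
  refine ⟨l + m, by simp, ?_, by simp⟩
  intro A hA
  rcases Multiset.mem_add.1 hA with h | h
  · exact hl A h
  · exact hm A h

lemma lengthSet_zeroSum {G₀ : Set G} {B : Multiset G} {x : ℕ} (hx : x ∈ LengthSet G₀ B) :
    IsZeroSumSeq G₀ B := by
  obtain ⟨l, rfl, hl, rfl⟩ := hx
  exact isZeroSumSeq_sum l fun A hA => (hl A hA).1

lemma lengthSet_zero {G₀ : Set G} {x : ℕ} (hx : x ∈ LengthSet G₀ (0 : Multiset G)) : x = 0 := by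
  obtain ⟨l, rfl, hl, h0⟩ := hx
  rw [Multiset.card_eq_zero]
  by_contra hne
  obtain ⟨a, ha⟩ := Multiset.exists_mem_of_ne_zero hne
  have : a ≤ l.sum := Multiset.le_sum_of_mem ha
  rw [h0] at this
  exact (hl a ha).2.1 (by simpa using this)

lemma exists_delta_le {G₀ : Set G} {B : Multiset G} {x y : ℕ} (hx : x ∈ LengthSet G₀ B)
    (hy : y ∈ LengthSet G₀ B) (hxy : x < y) : ∃ e ∈ DeltaSet G₀, e ≤ y - x := by
  classical
  have hex : ∃ z, z ∈ LengthSet G₀ B ∧ x < z := ⟨y, hy, hxy⟩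
  refine ⟨Nat.find hex - x, ⟨B, lengthSet_zeroSum hx, ?_, x, hx, Nat.find hex,
    (Nat.find_spec hex).1, (Nat.find_spec hex).2, rfl, ?_⟩, ?_⟩
  · rintro rfl
    have := lengthSet_zero hx
    have := lengthSet_zero hy
    omega
  · rintro z hz ⟨h1, h2⟩
    exact Nat.find_min hex h2 ⟨hz, h1⟩
  · have := Nat.find_min' hex ⟨hy, hxy⟩
    omega

lemma delta_pos {G₀ : Set G} {e : ℕ} (he : e ∈ DeltaSet G₀) : 0 < e := by
  obtain ⟨B, _, _, x, _, y, _, hxy, rfl, _⟩ := he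
  omega

lemma lengthSet_progression {G₀ : Set G} {B : Multiset G} {x d : ℕ} (hx : x ∈ LengthSet G₀ B)
    (hy : x + d ∈ LengthSet G₀ B) (k j : ℕ) (hj : j ≤ k) :
    k * x + j * d ∈ LengthSet G₀ (k • B) := by
  induction k generalizing j with
  | zero =>
    obtain rfl : j = 0 := by omega
    exact ⟨0, by simp, by simp, by simp⟩
  | succ k ih =>
    rw [succ_nsmul]
    rcases Nat.lt_or_ge k j with h | h
    · obtain rfl : j = k + 1 := by omega
      have := lengthSet_add (ih k le_rfl) hy
      convert this using 1
      ring
    · have := lengthSet_add (ih j h) hx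
      convert this using 1
      ring

/-- `min Δ(G₀)` divides every difference of lengths. -/
lemma min_delta_dvd {G₀ : Set G} (hne : (DeltaSet G₀).Nonempty) {B : Multiset G} {x y : ℕ}
    (hx : x ∈ LengthSet G₀ B) (hy : y ∈ LengthSet G₀ B) (hxy : x ≤ y) :
    sInf (DeltaSet G₀) ∣ y - x := by
  set d := sInf (DeltaSet G₀) with hd
  have hmem : d ∈ DeltaSet G₀ := Nat.sInf_mem hne
  have hpos := delta_pos hmem
  obtain ⟨B₀, _, _, a, ha, b, hb, hab, habd, _⟩ := hmem
  obtain rfl : b = a + d := by omega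
  by_contra hnd
  have hs : 0 < (y - x) % d := by
    rcases Nat.eq_zero_or_pos ((y - x) % d) with h | h
    · exact absurd (Nat.dvd_of_mod_eq_zero h) hnd
    · exact h
  have hs' := Nat.mod_lt (y - x) hpos
  have hdiv := Nat.div_add_mod (y - x) d
  generalize (y - x) / d = q at hdiv
  have h1 := lengthSet_add (lengthSet_progression ha hb q q le_rfl) hx
  have h2 := lengthSet_add (lengthSet_progression ha hb q 0 (by omega)) hy
  have hq : q * d = d * q := mul_comm _ _
  rw [hq] at h1
  rw [zero_mul] at h2
  generalize d * q = w at *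
  generalize q * a = v at *
  obtain ⟨e, he, hle⟩ := exists_delta_le h1 h2 (by omega)
  have := Nat.sInf_le he
  omega

/-- Criterion for a lower bound for `min Δ`. -/
lemma le_of_mem_delta {G₀ : Set G} (f : Multiset G → ℤ) (e : ℕ)
    (hadd : ∀ A B, f (A + B) = f A + f B)
    (hf : ∀ A, IsAtomSeq G₀ A → (e : ℤ) ∣ f A - 1) {s : ℕ} (hs : s ∈ DeltaSet G₀) : e ≤ s := by
  obtain ⟨B, hB1, hB2, x, hx, y, hy, hxy, rfl, hz⟩ := hs
  clear hB1 hB2 hz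
  have h0 : f 0 = 0 := by have := hadd 0 0; simp at this; exact this
  have key : ∀ z ∈ LengthSet G₀ B, (e : ℤ) ∣ f B - z := by
    rintro z ⟨l, rfl, hl, rfl⟩
    clear hx hy
    induction l using Multiset.induction_on with
    | empty => simp [h0]
    | cons a s ih =>
      have h1 := hf a (hl a (by simp))
      have h2 := ih (fun A hA => hl A (by simp [hA]))
      rw [Multiset.sum_cons, hadd, Multiset.card_cons]
      obtain ⟨u, hu⟩ := h1
      obtain ⟨v, hv⟩ := h2
      exact ⟨u + v, by push_cast; linarith⟩
  obtain ⟨u, hu⟩ := key x hx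
  obtain ⟨v, hv⟩ := key y hy
  have h3 : (e : ℤ) ∣ ((y - x : ℕ) : ℤ) := by
    refine ⟨u - v, ?_⟩
    rw [Nat.cast_sub hxy.le]
    linarith
  exact Nat.le_of_dvd (by omega) (Int.natCast_dvd_natCast.1 h3)

end BasicPart

section FinitePart

variable {G : Type*} [AddCommGroup G] [Finite G]

lemma sum_replicate_order (g : G) : (Multiset.replicate (addOrderOf g) g).sum = 0 := by
  simp [addOrderOf_nsmul_eq_zero]

lemma isAtomSeq_replicate {G₀ : Set G} {g : G} (hg : g ∈ G₀) :
    IsAtomSeq G₀ (Multiset.replicate (addOrderOf g) g) := by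
  have hpos := addOrderOf_pos g
  refine isAtomSeq_of_le ⟨fun x hx => ?_, sum_replicate_order g⟩ ?_ ?_
  · rw [Multiset.eq_of_mem_replicate hx]; exact hg
  · intro h
    have := congrArg Multiset.card h
    rw [Multiset.card_replicate, Multiset.card_zero] at this
    omega
  · intro B hB hs h0
    obtain ⟨k, hk, rfl⟩ := Multiset.le_replicate_iff.1 hB
    congr 1
    simp at hs
    have h1 := addOrderOf_dvd_of_nsmul_eq_zero hs
    have : k ≠ 0 := by rintro rfl; simp at h0
    exact le_antisymm hk (Nat.le_of_dvd (by omega) h1)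

lemma crossNumber_replicate (k : ℕ) (g : G) :
    crossNumber (Multiset.replicate k g) = k / (addOrderOf g : ℚ) := by
  simp [crossNumber, div_eq_mul_inv]

lemma crossNumber_replicate_order (g : G) :
    crossNumber (Multiset.replicate (addOrderOf g) g) = 1 := by
  have hpos := addOrderOf_pos g
  rw [crossNumber_replicate, div_self]
  positivity

lemma multiset_eq_sum_count [DecidableEq G] (A : Multiset G) :
    A = ∑ g ∈ A.toFinset, Multiset.replicate (A.count g) g := by
  conv_lhs => rw [← Multiset.toFinset_sum_count_nsmul_eq A]
  simp [Multiset.nsmul_singleton]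

/-- In a half-factorial set all atoms have cross number one. -/
lemma crossNumber_eq_one_of_hf {G₀ : Set G} (h : DeltaSet G₀ = ∅) {A : Multiset G}
    (hA : IsAtomSeq G₀ A) : crossNumber A = 1 := by
  classical
  by_contra hne
  set N := Nat.card G with hN
  have hNpos : 0 < N := Nat.card_pos
  -- first factorization
  have h1 : N ∈ LengthSet G₀ (N • A) :=
    ⟨Multiset.replicate N A, by simp, fun B hB => by
      rw [Multiset.eq_of_mem_replicate hB]; exact hA, by simp⟩
  -- second factorization
  let l : Multiset (Multiset G) := ∑ g ∈ A.toFinset,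
    Multiset.replicate (N / addOrderOf g * A.count g) (Multiset.replicate (addOrderOf g) g)
  have hl : ∀ B ∈ l, IsAtomSeq G₀ B ∧ crossNumber B = 1 := by
    intro B hB
    obtain ⟨g, hg, hB⟩ := Multiset.mem_sum.1 hB
    rw [Multiset.eq_of_mem_replicate hB]
    exact ⟨isAtomSeq_replicate (hA.1.1 g (by simpa using hg)), crossNumber_replicate_order g⟩
  have hsum : l.sum = N • A := by
    conv_rhs => rw [multiset_eq_sum_count A]
    simp only [l]
    rw [Finset.smul_sum, ← Multiset.coe_sumAddMonoidHom, map_sum]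
    refine Finset.sum_congr rfl fun g _ => ?_
    have hd : addOrderOf g ∣ N := addOrderOf_dvd_natCard g
    simp only [Multiset.coe_sumAddMonoidHom, Multiset.sum_replicate, Multiset.nsmul_replicate]
    congr 1
    calc N / addOrderOf g * A.count g * addOrderOf g
        = (N / addOrderOf g * addOrderOf g) * A.count g := by ring
      _ = _ := by rw [Nat.div_mul_cancel hd]
  have h2 : Multiset.card l ∈ LengthSet G₀ (N • A) := ⟨l, rfl, fun B hB => (hl B hB).1, hsum⟩
  have hk : (Multiset.card l : ℚ) = N * crossNumber A := by
    rw [← crossNumber_sum_of_one l fun B hB => (hl B hB).2, hsum]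
    simp [crossNumber, Multiset.map_nsmul, Multiset.sum_nsmul]
  have hne' : Multiset.card l ≠ N := by
    intro heq
    rw [heq] at hk
    have : (N : ℚ) ≠ 0 := by positivity
    apply hne
    field_simp at hk
    linarith
  rcases lt_or_gt_of_ne hne' with hlt | hlt
  · obtain ⟨e, he, _⟩ := exists_delta_le h2 h1 hlt
    rw [h] at he; exact he
  · obtain ⟨e, he, _⟩ := exists_delta_le h1 h2 hlt
    rw [h] at he; exact he

end FinitePart

set_option linter.unusedSectionVars false

section CorePart

variable {G : Type*} [AddCommGroup G] [Finite G] [DecidableEq G] {G₀ : Set G}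

/-- atoms of cross number one -/
def KOne (G₀ : Set G) (Z : Multiset G) : Prop := IsAtomSeq G₀ Z ∧ crossNumber Z = 1

/-- atoms of cross number different from one -/
def BadAtom (G₀ : Set G) (Z : Multiset G) : Prop := IsAtomSeq G₀ Z ∧ crossNumber Z ≠ 1

lemma BadAtom.gt (hLCN : IsLCNSet G₀) {A : Multiset G} (hA : BadAtom G₀ A) :
    1 < crossNumber A :=
  lt_of_le_of_ne (hLCN A hA.1) (Ne.symm hA.2)

lemma crossNumber_of_missing (hmin : IsMinNonHalfFactorial G₀) {A : Multiset G} {g : G}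
    (hA : IsAtomSeq G₀ A) (hg : g ∈ G₀) (hgA : g ∉ A) : crossNumber A = 1 := by
  have hss : G₀ \ {g} ⊂ G₀ := by
    refine ⟨Set.sdiff_subset, fun h => ?_⟩
    exact (h hg).2 rfl
  refine crossNumber_eq_one_of_hf (hmin.2 _ hss) (hA.mono fun x hx => ⟨hA.1.1 x hx, ?_⟩)
  rintro rfl
  exact hgA hx

lemma BadAtom.mem (hmin : IsMinNonHalfFactorial G₀) {A : Multiset G} {g : G}
    (hA : BadAtom G₀ A) (hg : g ∈ G₀) : g ∈ A := by
  by_contra h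
  exact hA.2 (crossNumber_of_missing hmin hA.1 hg h)

lemma BadAtom.count_lt {A : Multiset G} {g : G}
    (hA : BadAtom G₀ A) : Multiset.count g A < addOrderOf g := by
  by_contra h
  have hle : Multiset.replicate (addOrderOf g) g ≤ A := by
    rw [← Multiset.le_count_iff_replicate_le]; omega
  have h0 : Multiset.replicate (addOrderOf g) g ≠ 0 := by
    intro h0
    have := congrArg Multiset.card h0
    rw [Multiset.card_replicate, Multiset.card_zero] at this
    have := addOrderOf_pos g
    omega
  have := hA.1.eq_of_le (sum_replicate_order g) h0 hle
  apply hA.2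
  rw [← this, crossNumber_replicate_order]

lemma kOne_replicate {g : G} (hg : g ∈ G₀) :
    KOne G₀ (Multiset.replicate (addOrderOf g) g) :=
  ⟨isAtomSeq_replicate hg, crossNumber_replicate_order g⟩

lemma exists_kOne_factorization (hmin : IsMinNonHalfFactorial G₀) {B : Multiset G} {g : G}
    (hB : IsZeroSumSeq G₀ B) (hg : g ∈ G₀) (hgB : g ∉ B) :
    ∃ F : Multiset (Multiset G), (∀ Z ∈ F, KOne G₀ Z) ∧ F.sum = B := by
  obtain ⟨l, hl, hs⟩ := exists_factorization B hB
  refine ⟨l, fun Z hZ => ⟨hl Z hZ, crossNumber_of_missing hmin (hl Z hZ) hg fun h => hgB ?_⟩, hs⟩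
  rw [← hs]
  exact Multiset.mem_of_le (Multiset.le_sum_of_mem hZ) h

lemma card_le_of_crossNumber (m : ℕ) (hm : ∀ g ∈ G₀, addOrderOf g ≤ m) (Z : Multiset G)
    (hZ : ∀ x ∈ Z, x ∈ G₀) : (Multiset.card Z : ℚ) ≤ m * crossNumber Z := by
  induction Z using Multiset.induction_on with
  | empty => simp [crossNumber_zero]
  | cons a s ih =>
    have h1 := ih fun x hx => hZ x (by simp [hx])
    have h2 := hm a (hZ a (by simp))
    have h3 := addOrderOf_pos a
    have h4 : (1 : ℚ) ≤ m * (addOrderOf a : ℚ)⁻¹ := by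
      rw [← div_eq_mul_inv, one_le_div (by positivity)]
      exact_mod_cast h2
    have h5 : crossNumber (a ::ₘ s) = (addOrderOf a : ℚ)⁻¹ + crossNumber s := by
      simp [crossNumber]
    rw [h5, Multiset.card_cons, mul_add]
    push_cast
    linarith

lemma KOne.card_le (m : ℕ) (hm : ∀ g ∈ G₀, addOrderOf g ≤ m) {Z : Multiset G}
    (hZ : KOne G₀ Z) : Multiset.card Z ≤ m := by
  have := card_le_of_crossNumber m hm Z hZ.1.1.1
  rw [hZ.2, mul_one] at this
  exact_mod_cast this

lemma count_map_mul_le (X : Multiset G) (c : Multiset G → G) (e : G)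
    (U : Multiset (Multiset G)) (h : ∀ u ∈ U, X.count (c u) < u.count (c u)) :
    (U.map c).count e * (X.count e + 1) ≤ U.sum.count e := by
  induction U using Multiset.induction_on with
  | empty => simp
  | cons a s ih =>
    have h1 := ih fun u hu => h u (by simp [hu])
    have h2 := h a (by simp)
    rw [Multiset.map_cons, Multiset.sum_cons, Multiset.count_add, Multiset.count_cons]
    split_ifs with he
    · subst he
      rw [add_mul]; omega
    · rw [add_zero]; omega

lemma core_inequality {A D Z : Multiset G} {U : Multiset (Multiset G)}
    (hsupp : ∀ g ∈ Z, g ∈ A) (hZA : ¬ Z ≤ A) (hU : A + D + Z = U.sum)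
    (hno : ∀ u ∈ U, ¬ u ≤ A + D) : Multiset.card U < Multiset.card Z := by
  have hch : ∀ u : Multiset G, ∃ e : G, u ∈ U → (A + D).count e < u.count e := by
    intro u
    by_cases hu : u ∈ U
    · have := hno u hu
      rw [Multiset.le_iff_count] at this
      push Not at this
      obtain ⟨e, he⟩ := this
      exact ⟨e, fun _ => he⟩
    · exact ⟨0, fun h => absurd h hu⟩
  choose c hc using hch
  have key : ∀ e, (U.map c).count e * ((A + D).count e + 1) ≤ (A + D).count e + Z.count e := by
    intro e
    have := count_map_mul_le (A + D) c e U hc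
    rwa [← hU, Multiset.count_add _ (A + D)] at this
  have hle : U.map c ≤ Z := by
    rw [Multiset.le_iff_count]
    intro e
    have := key e
    by_contra hcon
    push Not at hcon
    nlinarith
  have hne : U.map c ≠ Z := by
    intro heq
    rw [Multiset.le_iff_count] at hZA
    push Not at hZA
    obtain ⟨e, he⟩ := hZA
    have h1 : e ∈ Z := Multiset.count_pos.1 (by omega)
    have h2 := Multiset.count_pos.2 (hsupp e h1)
    have h3 := key e
    rw [heq, Multiset.count_add] at h3
    nlinarith
  have := Multiset.card_lt_card (lt_of_le_of_ne hle hne)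
  simpa using this

/-- mixed relations -/
def MixRel (G₀ : Set G) (t : ℕ) : Prop :=
  ∃ A Z D : Multiset G, ∃ U : Multiset (Multiset G), BadAtom G₀ A ∧ KOne G₀ Z ∧
    IsZeroSumSeq G₀ D ∧ (∀ u ∈ U, KOne G₀ u) ∧ Multiset.card U = t ∧ A + Z + D = U.sum

lemma mixRel_bound (hmin : IsMinNonHalfFactorial G₀) (d : ℕ) (k₀ : ℚ)
    (hk₀ : ∀ A, BadAtom G₀ A → k₀ ≤ crossNumber A) (hd : (d : ℚ) + 1 ≤ k₀)
    (hcard : ∀ Z, KOne G₀ Z → Multiset.card Z ≤ d + 2) (t : ℕ) (ht : MixRel G₀ t) :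
    2 * k₀ + 1 ≤ t := by
  induction t using Nat.strong_induction_on with
  | _ t ih =>
    have ih' : ∀ s, s + 1 = t → MixRel G₀ s → 2 * k₀ + 1 ≤ t := by
      intro s hs hr
      have := ih s (by omega) hr
      have h2 : (s : ℚ) + 1 = t := by exact_mod_cast hs
      linarith
    obtain ⟨A, Z, D, U, hA, hZ, hD, hU, rfl, hrel⟩ := ht
    have hk := congrArg crossNumber hrel
    rw [crossNumber_sum_of_one U fun u hu => (hU u hu).2, crossNumber_add, crossNumber_add,
      hZ.2] at hk
    have hAk := hk₀ A hA
    have hDk := crossNumber_nonneg D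
    by_cases hno : ∀ u ∈ U, ¬ u ≤ A + D
    · exfalso
      have hZA : ¬ Z ≤ A := by
        intro hle
        have := hA.1.eq_of_le hZ.1.1.2 hZ.1.2.1 hle
        subst this
        exact hA.2 hZ.2
      have h1 := core_inequality (D := D) (U := U) (fun g hg => hA.mem hmin (hZ.1.1.1 g hg)) hZA
        (by rw [← hrel]; abel) hno
      have h2 := hcard Z hZ
      have h3 : (Multiset.card U : ℚ) + 1 ≤ d + 2 := by exact_mod_cast (by omega :
        Multiset.card U + 1 ≤ d + 2)
      linarith
    · push Not at hno
      obtain ⟨u, huU, hu⟩ := hno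
      obtain ⟨D', hD'⟩ := Multiset.le_iff_exists_add.1 hu
      obtain ⟨U', rfl⟩ := Multiset.exists_cons_of_mem huU
      rw [Multiset.sum_cons] at hrel
      have hrel2 : Z + D' = U'.sum := by
        have : u + (Z + D') = u + U'.sum := by
          rw [← hrel]
          calc u + (Z + D') = (u + D') + Z := by abel
            _ = _ := by rw [← hD']; abel
        exact add_left_cancel this
      have hAD := hA.1.1.add hD
      have hD'z : IsZeroSumSeq G₀ D' := hAD.right (hU u huU).1.1.2 hD'
      obtain ⟨F, hF, hFs⟩ := exists_factorization D' hD'z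
      rw [Multiset.card_cons] at ih' hk ⊢
      by_cases hb : ∃ B ∈ F, BadAtom G₀ B
      · obtain ⟨B, hBF, hB⟩ := hb
        obtain ⟨F', rfl⟩ := Multiset.exists_cons_of_mem hBF
        refine ih' _ rfl ⟨B, Z, F'.sum, U', hB, hZ,
          isZeroSumSeq_sum F' fun x hx => (hF x (by simp [hx])).1,
          fun x hx => hU x (by simp [hx]), rfl, ?_⟩
        rw [← hrel2, ← hFs, Multiset.sum_cons]
        abel
      · have hF1 : ∀ x ∈ F, KOne G₀ x := by
          intro x hx
          refine ⟨hF x hx, ?_⟩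
          by_contra hne
          exact hb ⟨x, hx, hF x hx, hne⟩
        have hu1 := hU u huU
        have hk2 := congrArg crossNumber hD'
        rw [crossNumber_add, crossNumber_add, ← hFs,
          crossNumber_sum_of_one F fun x hx => (hF1 x hx).2, hu1.2] at hk2
        have hcF : Multiset.card F + 1 = Multiset.card U' := by
          have : (Multiset.card F : ℚ) + 1 = Multiset.card U' := by
            push_cast at hk; linarith
          exact_mod_cast this
        obtain ⟨E, hE, hEs⟩ := exists_factorization D hD
        by_cases hg : ∃ W ∈ E, KOne G₀ W
        · obtain ⟨W, hWE, hW⟩ := hg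
          obtain ⟨E', rfl⟩ := Multiset.exists_cons_of_mem hWE
          refine ih' _ rfl ⟨A, W, E'.sum, u ::ₘ F, hA, hW,
            isZeroSumSeq_sum E' fun x hx => (hE x (by simp [hx])).1, ?_, by simp [hcF], ?_⟩
          · intro x hx
            rcases Multiset.mem_cons.1 hx with rfl | hx
            · exact hu1
            · exact hF1 x hx
          · rw [Multiset.sum_cons, hFs, ← hD', ← hEs, Multiset.sum_cons]
            abel
        · rcases Multiset.empty_or_exists_mem E with rfl | ⟨B, hBE⟩
          · exfalso
            have hD0 : D = 0 := by rw [← hEs]; simp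
            rw [hD0, add_zero] at hu
            have := hA.1.eq_of_le hu1.1.1.2 hu1.1.2.1 hu
            subst this
            exact hA.2 hu1.2
          · have hB : BadAtom G₀ B := by
              refine ⟨hE B hBE, fun h => hg ⟨B, hBE, hE B hBE, h⟩⟩
            obtain ⟨E', rfl⟩ := Multiset.exists_cons_of_mem hBE
            have hBk := hk₀ B hB
            have hE'k := crossNumber_nonneg E'.sum
            rw [← hEs, Multiset.sum_cons, crossNumber_add] at hk
            linarith

lemma exists_shorten {α : Type*} (w : α → ℕ) (o : ℕ) (ho : 0 < o) (C : Multiset α) :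
    ∃ C' ≤ C, Multiset.card C' < o ∧ (C'.map w).sum ≡ (C.map w).sum [MOD o] := by
  induction hn : Multiset.card C using Nat.strong_induction_on generalizing C with
  | _ n ih =>
    by_cases hlt : Multiset.card C < o
    · exact ⟨C, le_rfl, hlt, rfl⟩
    · obtain ⟨l, rfl⟩ := Quot.exists_rep C
      change Multiset.card (l : Multiset α) = n at hn
      change ¬ Multiset.card (l : Multiset α) < o at hlt
      rw [Multiset.coe_card] at hn hlt
      have : NeZero o := ⟨ho.ne'⟩
      have hpig : ∃ i j : Fin (o + 1), i ≠ j ∧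
          ((((l.take i).map w).sum : ℕ) : ZMod o) = (((l.take j).map w).sum : ℕ) :=
        Fintype.exists_ne_map_eq_of_card_lt
          (fun i : Fin (o + 1) => ((((l.take i).map w).sum : ℕ) : ZMod o)) (by simp)
      have hpig2 : ∃ i j : ℕ, i < j ∧ j ≤ o ∧
          ((((l.take i).map w).sum : ℕ) : ZMod o) = (((l.take j).map w).sum : ℕ) := by
        obtain ⟨i, j, hij, h⟩ := hpig
        rcases lt_or_gt_of_ne hij with h' | h'
        · exact ⟨i, j, h', by omega, h⟩
        · exact ⟨j, i, h', by omega, h.symm⟩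
      obtain ⟨i, j, hij, hj, h⟩ := hpig2
      rw [ZMod.natCast_eq_natCast_iff] at h
      have hdrop : (l.take j) ++ l.drop j = l := List.take_append_drop j l
      have htake : l.take i ++ (l.take j).drop i = l.take j := by
        have := List.take_append_drop i (l.take j)
        rwa [List.take_take, min_eq_left hij.le] at this
      have hlen : (l.take i ++ l.drop j).length < n := by
        simp only [List.length_append, List.length_take, List.length_drop]
        omega
      obtain ⟨C', hC', hcard, hmod⟩ := ih _ hlen (↑(l.take i ++ l.drop j)) (by simp)
      refine ⟨C', hC'.trans ?_, hcard, hmod.trans ?_⟩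
      · change (↑(l.take i ++ l.drop j) : Multiset α) ≤ ↑l
        conv_rhs => rw [← hdrop, ← htake]
        rw [← Multiset.coe_add, ← Multiset.coe_add, ← Multiset.coe_add]
        refine add_le_add_left ?_ _
        exact Multiset.le_add_right _ _
      · change (Multiset.map w (↑(l.take i ++ l.drop j) : Multiset α)).sum ≡
          (Multiset.map w (↑l : Multiset α)).sum [MOD o]
        conv_rhs => rw [← hdrop]
        simp only [← Multiset.coe_add, Multiset.map_add, Multiset.sum_add]
        refine Nat.ModEq.add_right _ ?_
        simpa using h

lemma count_msum (g : G) (C : Multiset (Multiset G)) :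
    C.sum.count g = (C.map (fun u => u.count g)).sum := by
  induction C using Multiset.induction_on with
  | empty => simp
  | cons a s ih => simp [ih]

lemma final_contradiction (hmin : IsMinNonHalfFactorial G₀) (d : ℕ) (k₀ : ℚ)
    (hk₀ : ∀ A, BadAtom G₀ A → k₀ ≤ crossNumber A) (hd : (d : ℚ) + 1 ≤ k₀)
    (hord : ∀ g ∈ G₀, addOrderOf g ≤ d + 2)
    {A : Multiset G} (hA : BadAtom G₀ A) (hAk : crossNumber A = k₀)
    {g : G} (hg : g ∈ G₀)
    {N P : Multiset (Multiset G)} (hN : ∀ Z ∈ N, KOne G₀ Z) (hP : ∀ Z ∈ P, KOne G₀ Z)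
    (hrep : A + N.sum = P.sum) : False := by
  have hopos := addOrderOf_pos g
  have hog := hord g hg
  set o := addOrderOf g with ho
  obtain ⟨C, hCle, hCcard, hCmod⟩ := exists_shorten (fun u : Multiset G => u.count g) o hopos
    (N + (o - 1) • P)
  rw [← count_msum, ← count_msum] at hCmod
  have hC1 : ∀ Z ∈ C, KOne G₀ Z := by
    intro Z hZ
    rcases Multiset.mem_add.1 (Multiset.mem_of_le hCle hZ) with h | h
    · exact hN Z h
    · exact hP Z (Multiset.mem_of_mem_nsmul h)
  have hdvd : o ∣ (A + C.sum).count g := by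
    have h1 : A.count g + (N + (o - 1) • P).sum.count g = o * P.sum.count g := by
      rw [Multiset.sum_add, Multiset.sum_nsmul, Multiset.count_add, Multiset.count_nsmul,
        ← add_assoc, ← Multiset.count_add, hrep]
      obtain ⟨q, hq⟩ : ∃ q, o = q + 1 := ⟨o - 1, by omega⟩
      rw [hq]
      simp only [Nat.add_sub_cancel]
      ring
    have h2 : (A + C.sum).count g ≡ A.count g + (N + (o - 1) • P).sum.count g [MOD o] := by
      rw [Multiset.count_add]
      exact hCmod.add_left _
    rw [h1] at h2
    exact (Nat.modEq_zero_iff_dvd).1 (h2.trans ((Nat.modEq_zero_iff_dvd).2 (dvd_mul_right _ _)))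
  obtain ⟨c, hc⟩ := hdvd
  have hCz : IsZeroSumSeq G₀ C.sum := isZeroSumSeq_sum C fun x hx => (hC1 x hx).1.1
  have hsplit : A + C.sum = (Multiset.replicate c (Multiset.replicate o g)).sum +
      (A + C.sum).filter (fun x => ¬ g = x) := by
    conv_lhs => rw [← Multiset.filter_add_not (fun x => g = x) (A + C.sum)]
    congr 1
    rw [Multiset.filter_eq, hc, Multiset.sum_replicate, Multiset.nsmul_replicate, mul_comm]
  have hR : IsZeroSumSeq G₀ ((A + C.sum).filter (fun x => ¬ g = x)) := by
    refine (hA.1.1.add hCz).right ?_ hsplit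
    rw [Multiset.sum_replicate, Multiset.nsmul_replicate, Multiset.sum_replicate, mul_nsmul',
      ho, addOrderOf_nsmul_eq_zero, nsmul_zero]
  obtain ⟨F, hF, hFs⟩ := exists_kOne_factorization hmin hR hg (by simp)
  rcases Multiset.empty_or_exists_mem C with rfl | ⟨Z, hZC⟩
  · simp only [Multiset.sum_zero, add_zero] at hc
    have h1 := Multiset.count_pos.2 (hA.mem hmin hg)
    have h2 : A.count g < o := hA.count_lt
    rcases Nat.eq_zero_or_pos c with rfl | hcpos
    · omega
    · nlinarith
  · obtain ⟨C', rfl⟩ := Multiset.exists_cons_of_mem hZC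
    have hall : ∀ u ∈ Multiset.replicate c (Multiset.replicate o g) + F, KOne G₀ u := by
      intro u hu
      rcases Multiset.mem_add.1 hu with h | h
      · rw [Multiset.eq_of_mem_replicate h]
        exact kOne_replicate hg
      · exact hF u h
    have hsum : A + (Z ::ₘ C').sum = (Multiset.replicate c (Multiset.replicate o g) + F).sum := by
      rw [Multiset.sum_add, hFs]; exact hsplit
    have hM := mixRel_bound hmin d k₀ hk₀ hd (fun Z hZ => hZ.card_le _ hord) _
      ⟨A, Z, C'.sum, _, hA, hC1 Z (by simp),
        isZeroSumSeq_sum C' fun x hx => (hC1 x (by simp [hx])).1.1, hall, rfl, by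
          rw [← hsum, Multiset.sum_cons]; abel⟩
    rw [← crossNumber_sum_of_one _ fun u hu => (hall u hu).2, ← hsum, crossNumber_add,
      crossNumber_sum_of_one _ fun u hu => (hC1 u hu).2, hAk] at hM
    have h3 : (Multiset.card (Z ::ₘ C') : ℚ) + 1 ≤ d + 2 := by
      exact_mod_cast (by omega : Multiset.card (Z ::ₘ C') + 1 ≤ d + 2)
    linarith

end CorePart

set_option linter.unusedSectionVars false

section RepPart

variable {G : Type*} [AddCommGroup G] [Fintype G] [DecidableEq G]

lemma pRank_le_card (p : ℕ) : pRank G p ≤ Nat.card G := by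
  unfold pRank
  refine (Nat.log_le_self _ _).trans ?_
  exact Nat.card_le_card_of_injective (fun x : {x : G // p • x = 0} => x.1)
    Subtype.val_injective

lemma bddAbove_pRank : BddAbove {r : ℕ | ∃ p : ℕ, p.Prime ∧ r = pRank G p} := by
  refine ⟨Nat.card G, ?_⟩
  rintro r ⟨p, _, rfl⟩
  exact pRank_le_card p

lemma card_torsion_lt {p : ℕ} (hp : p.Prime) :
    Nat.card {x : G // p • x = 0} < p ^ (rankG G + 1) := by
  have h1 : pRank G p ≤ rankG G := le_csSup bddAbove_pRank ⟨p, hp, rfl⟩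
  refine lt_of_lt_of_le (Nat.lt_pow_succ_log_self hp.one_lt _) ?_
  exact Nat.pow_le_pow_right hp.pos (Nat.succ_le_succ h1)

lemma card_quot_le (H : AddSubgroup G) (p : ℕ) :
    Nat.card (H ⧸ (nsmulAddMonoidHom p : H →+ H).range) ≤ Nat.card {x : G // p • x = 0} := by
  set f : H →+ H := nsmulAddMonoidHom p with hf
  have h1 := f.ker.card_mul_index
  rw [AddSubgroup.index_ker] at h1
  have h2 := f.range.card_mul_index
  have h3 : 0 < Nat.card f.range := Nat.card_pos
  have h4 : f.range.index = Nat.card f.ker := by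
    apply Nat.eq_of_mul_eq_mul_left h3
    rw [h2, ← h1, mul_comm]
  change f.range.index ≤ _
  rw [h4]
  refine Nat.card_le_card_of_injective
    (fun x : f.ker => (⟨((x : H) : G), ?_⟩ : {x : G // p • x = 0})) ?_
  · have := x.2
    rw [AddMonoidHom.mem_ker] at this
    have h5 := congrArg (Subtype.val) this
    simpa [hf] using h5
  · intro x y hxy
    simp only [Subtype.mk.injEq] at hxy
    exact Subtype.ext (Subtype.ext hxy)

lemma exists_relation {p : ℕ} (hp : p.Prime) (G₁ : Finset G) (hcard : rankG G < G₁.card) :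
    ∃ x : G → ℤ, (∀ g ∉ G₁, x g = 0) ∧ ∑ g, x g • g = 0 ∧ ∃ g ∈ G₁, ¬ (p : ℤ) ∣ x g := by
  by_contra hcon
  push Not at hcon
  let φ : (G₁ → ℤ) →+ G :=
    AddMonoidHom.mk' (fun y => ∑ i : G₁, y i • (i : G)) (by
      intro a b
      simp [add_smul, Finset.sum_add_distrib])
  have hφ : ∀ y, φ y = 0 → ∀ i, (p : ℤ) ∣ y i := by
    intro y hy i
    have h := hcon (fun g => if h : g ∈ G₁ then y ⟨g, h⟩ else 0) (fun g hg => by simp [hg]) ?_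
      i.1 i.2
    · simpa using h
    · rw [← Finset.sum_subset (Finset.subset_univ G₁)]
      · rw [← Finset.sum_coe_sort]
        simpa [φ] using hy
      · intro g _ hg
        simp [hg]
  let H := φ.range
  let f : H →+ H := nsmulAddMonoidHom p
  have hpp : 0 < p := hp.pos
  have hinj : Function.Injective (fun y : G₁ → Fin p =>
      (QuotientAddGroup.mk (⟨φ (fun i => ((y i : ℕ) : ℤ)), ⟨_, rfl⟩⟩ : H) : H ⧸ f.range)) := by
    intro y z hyz
    simp only at hyz
    rw [QuotientAddGroup.eq] at hyz
    obtain ⟨⟨_, w, rfl⟩, hw⟩ := hyz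
    have hw' := congrArg Subtype.val hw
    have h0 : φ ((p : ℤ) • w + (fun i => ((y i : ℕ) : ℤ)) - fun i => ((z i : ℕ) : ℤ)) = 0 := by
      rw [map_sub, _root_.map_add, map_zsmul]
      simp [f] at hw'
      rw [natCast_zsmul, hw']
      abel
    funext i
    have h1 := hφ _ h0 i
    simp only [Pi.sub_apply, Pi.add_apply, Pi.smul_apply, smul_eq_mul] at h1
    have h2 : (p : ℤ) ∣ ((y i : ℕ) : ℤ) - ((z i : ℕ) : ℤ) := by
      obtain ⟨u, hu⟩ := h1
      exact ⟨u - w i, by rw [mul_sub]; linarith⟩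
    have h3 := (Nat.modEq_iff_dvd.2 h2)
    have h4 : (z i : ℕ) = (y i : ℕ) := by
      have := h3
      unfold Nat.ModEq at this
      rwa [Nat.mod_eq_of_lt (z i).2, Nat.mod_eq_of_lt (y i).2] at this
    exact (Fin.ext h4).symm
  have h1 := Nat.card_le_card_of_injective _ hinj
  have h2 := card_quot_le H p
  have h3 := card_torsion_lt (G := G) hp
  have h4 : p ^ (rankG G + 1) ≤ p ^ G₁.card := Nat.pow_le_pow_right hp.pos hcard
  have h5 : Nat.card (G₁ → Fin p) = p ^ G₁.card := by
    simp
  rw [h5] at h1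
  exact absurd (h1.trans h2) (by omega)

/-- vectors that are differences of sums of atoms of cross number one -/
def repGroup (G₀ : Set G) : AddSubgroup (G → ℤ) where
  carrier := {x | ∃ N P : Multiset (Multiset G), (∀ Z ∈ N, KOne G₀ Z) ∧ (∀ Z ∈ P, KOne G₀ Z) ∧
    ∀ g, x g = (P.sum.count g : ℤ) - N.sum.count g}
  zero_mem' := ⟨0, 0, by simp, by simp, by simp⟩
  add_mem' := by
    rintro x y ⟨N, P, hN, hP, hx⟩ ⟨N', P', hN', hP', hy⟩
    refine ⟨N + N', P + P', ?_, ?_, ?_⟩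
    · intro Z hZ
      rcases Multiset.mem_add.1 hZ with h | h
      · exact hN Z h
      · exact hN' Z h
    · intro Z hZ
      rcases Multiset.mem_add.1 hZ with h | h
      · exact hP Z h
      · exact hP' Z h
    · intro g
      rw [Pi.add_apply, hx, hy]
      simp only [Multiset.sum_add, Multiset.count_add]
      push_cast
      ring
  neg_mem' := by
    rintro x ⟨N, P, hN, hP, hx⟩
    refine ⟨P, N, hP, hN, fun g => ?_⟩
    rw [Pi.neg_apply, hx]
    ring

lemma count_sum_replicate (c : G → ℕ) (g : G) :
    (∑ h, Multiset.replicate (c h) h).count g = c g := by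
  rw [Multiset.count_sum']
  simp [Multiset.count_replicate]

lemma mem_repGroup {G₀ : Set G} (hmin : IsMinNonHalfFactorial G₀) (x : G → ℤ)
    (hx : ∀ g, g ∉ G₀ → x g = 0) (hs : ∑ g, x g • g = 0) {h : G} (hh : h ∈ G₀) (hxh : x h = 0) :
    x ∈ repGroup G₀ := by
  let B : Multiset G := ∑ g, Multiset.replicate (x g + (x g).natAbs * addOrderOf g).toNat g
  have hnn : ∀ g, 0 ≤ x g + (x g).natAbs * addOrderOf g := by
    intro g
    have h1 : (1 : ℤ) ≤ addOrderOf g := by exact_mod_cast addOrderOf_pos g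
    have h2 : -x g ≤ (x g).natAbs := by omega
    have h3 : (0 : ℤ) ≤ (x g).natAbs := by omega
    nlinarith
  have hcount : ∀ g, ((B.count g : ℕ) : ℤ) = x g + (x g).natAbs * addOrderOf g := by
    intro g
    simp only [B]
    rw [count_sum_replicate (fun g => (x g + (x g).natAbs * addOrderOf g).toNat),
      Int.toNat_of_nonneg (hnn g)]
  have hBmem : ∀ g ∈ B, x g ≠ 0 := by
    intro g hg h0
    have h1 := Multiset.count_pos.2 hg
    have h2 := hcount g
    rw [h0] at h2
    simp only [Int.natAbs_zero, Nat.cast_zero, zero_mul, add_zero] at h2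
    omega
  have hBz : IsZeroSumSeq G₀ B := by
    refine ⟨fun g hg => ?_, ?_⟩
    · by_contra hng
      exact hBmem g hg (hx g hng)
    · simp only [B]
      rw [← Multiset.coe_sumAddMonoidHom, map_sum, ← hs]
      refine Finset.sum_congr rfl fun g _ => ?_
      rw [Multiset.coe_sumAddMonoidHom, Multiset.sum_replicate, ← natCast_zsmul,
        Int.toNat_of_nonneg (hnn g), add_smul, mul_smul, natCast_zsmul g (addOrderOf g),
        addOrderOf_nsmul_eq_zero]
      simp
  obtain ⟨P, hP, hPs⟩ := exists_kOne_factorization hmin hBz hh fun hmem => hBmem h hmem hxh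
  refine ⟨∑ g, Multiset.replicate (x g).natAbs (Multiset.replicate (addOrderOf g) g), P, ?_, hP, ?_⟩
  · intro Z hZ
    obtain ⟨g, _, hZ⟩ := Multiset.mem_sum.1 hZ
    have h0 : (x g).natAbs ≠ 0 := by
      intro h0; rw [h0] at hZ; simp at hZ
    rw [Multiset.eq_of_mem_replicate hZ]
    apply kOne_replicate
    by_contra hng
    exact h0 (by simp [hx g hng])
  · intro g
    rw [hPs, hcount]
    have : (∑ g, Multiset.replicate (x g).natAbs (Multiset.replicate (addOrderOf g) g)).sum =
        ∑ g, Multiset.replicate ((x g).natAbs * addOrderOf g) g := by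
      rw [← Multiset.coe_sumAddMonoidHom, map_sum]
      refine Finset.sum_congr rfl fun g _ => ?_
      simp only [Multiset.coe_sumAddMonoidHom, Multiset.sum_replicate, Multiset.nsmul_replicate]
    rw [this, count_sum_replicate (fun g => (x g).natAbs * addOrderOf g)]
    push_cast
    ring

lemma exists_rep {G₀ : Finset G} (hmin : IsMinNonHalfFactorial (G₀ : Set G))
    (hcard : rankG G + 2 ≤ G₀.card) {A : Multiset G} (hA : IsZeroSumSeq (G₀ : Set G) A) :
    ∃ N P : Multiset (Multiset G), (∀ Z ∈ N, KOne (G₀ : Set G) Z) ∧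
      (∀ Z ∈ P, KOne (G₀ : Set G) Z) ∧ A + N.sum = P.sum := by
  obtain ⟨h, hh⟩ : G₀.Nonempty := Finset.card_pos.1 (by omega)
  let a : G → ℤ := fun g => A.count g
  have ha0 : ∀ g, g ∉ (G₀ : Set G) → a g = 0 := by
    intro g hg
    have : g ∉ A := fun hgA => hg (hA.1 g hgA)
    simp [a, this]
  have has : ∑ g, a g • g = 0 := by
    rw [← hA.2, Finset.sum_multiset_count]
    rw [← Finset.sum_subset (Finset.subset_univ A.toFinset)]
    · simp [a]
    · intro g _ hg
      have : g ∉ A := by simpa using hg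
      simp [a, this]
  let K : AddSubgroup ℤ := (repGroup (G₀ : Set G)).comap (zmultiplesHom (G → ℤ) a)
  have hK : ∀ p : ℕ, p.Prime → ∃ m ∈ K, ¬ (p : ℤ) ∣ m := by
    intro p hp
    obtain ⟨x, hx0, hxs, g, hg, hpg⟩ := exists_relation hp (G₀.erase h) (by
      rw [Finset.card_erase_of_mem hh]; omega)
    have hx0' : ∀ g, g ∉ (G₀ : Set G) → x g = 0 := by
      intro g hg
      apply hx0
      simp only [Finset.mem_erase, not_and]
      intro _ h2
      exact hg (by simpa using h2)
    have hxR : x ∈ repGroup (G₀ : Set G) :=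
      mem_repGroup hmin x hx0' hxs (h := h) (by simpa using hh) (hx0 h (by simp))
    refine ⟨x g, ?_, hpg⟩
    rw [AddSubgroup.mem_comap, zmultiplesHom_apply]
    have h1 : x g • a - a g • x ∈ repGroup (G₀ : Set G) := by
      refine mem_repGroup hmin _ ?_ ?_ (h := g) (by
        simpa using Finset.mem_of_mem_erase hg) ?_
      · intro g' hg'
        simp [ha0 g' hg', hx0' g' hg']
      · have : ∑ g', (x g • a - a g • x) g' • g' =
            x g • ∑ g', a g' • g' - a g • ∑ g', x g' • g' := by
          rw [Finset.smul_sum, Finset.smul_sum, ← Finset.sum_sub_distrib]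
          refine Finset.sum_congr rfl fun g' _ => ?_
          simp only [Pi.sub_apply, Pi.smul_apply, smul_eq_mul, sub_smul, mul_smul]
        rw [this, has, hxs]
        simp
      · simp only [Pi.sub_apply, Pi.smul_apply, smul_eq_mul]
        ring
    have h2 := (repGroup (G₀ : Set G)).add_mem h1
      ((repGroup (G₀ : Set G)).zsmul_mem hxR (a g))
    simpa using h2
  have h1K : (1 : ℤ) ∈ K := by
    obtain ⟨n, hn⟩ := Int.subgroup_cyclic K
    have hn1 : n.natAbs = 1 := by
      by_contra hne
      obtain ⟨p, hp, hpn⟩ := Nat.exists_prime_and_dvd hne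
      obtain ⟨m, hm, hpm⟩ := hK p hp
      rw [hn, AddSubgroup.mem_closure_singleton] at hm
      obtain ⟨k, rfl⟩ := hm
      apply hpm
      rw [smul_eq_mul]
      exact Dvd.dvd.mul_left (Int.natCast_dvd.2 hpn) _
    have hnK : n ∈ K := by
      rw [hn]; exact AddSubgroup.subset_closure rfl
    rcases Int.natAbs_eq n with h | h
    · rw [hn1] at h; rw [h] at hnK; simpa using hnK
    · rw [hn1] at h; rw [h] at hnK
      have := K.neg_mem hnK
      simpa using this
  rw [AddSubgroup.mem_comap, zmultiplesHom_apply, one_smul] at h1K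
  obtain ⟨N, P, hN, hP, hx⟩ := h1K
  refine ⟨N, P, hN, hP, ?_⟩
  ext g
  rw [Multiset.count_add]
  have := hx g
  simp only [a] at this
  omega

lemma no_bad_of_large {G₀ : Finset G} (hmin : IsMinNonHalfFactorial (G₀ : Set G))
    (hLCN : IsLCNSet (G₀ : Set G)) (hcard : rankG G + 2 ≤ G₀.card)
    (hord : ∀ g ∈ (G₀ : Set G), addOrderOf g ≤ sInf (DeltaSet (G₀ : Set G)) + 2)
    {A : Multiset G} (hA : BadAtom (G₀ : Set G) A) : False := by
  classical
  obtain ⟨h, hh⟩ : G₀.Nonempty := Finset.card_pos.1 (by omega)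
  have key : ∀ A, BadAtom (G₀ : Set G) A → ∃ k : ℕ, crossNumber A = k ∧
      sInf (DeltaSet (G₀ : Set G)) + 1 ≤ k := by
    intro A hA
    obtain ⟨N, P, hN, hP, hrep⟩ := exists_rep hmin hcard hA.1.1
    have hk := congrArg crossNumber hrep
    rw [crossNumber_add, crossNumber_sum_of_one N fun x hx => (hN x hx).2,
      crossNumber_sum_of_one P fun x hx => (hP x hx).2] at hk
    have h1 := hA.gt hLCN
    have hlt : Multiset.card N + 1 < Multiset.card P := by
      have : (Multiset.card N : ℚ) + 1 < Multiset.card P := by linarith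
      exact_mod_cast this
    have hl1 : Multiset.card N + 1 ∈ LengthSet (G₀ : Set G) (A + N.sum) := by
      refine ⟨A ::ₘ N, by simp, ?_, by simp⟩
      intro x hx
      rcases Multiset.mem_cons.1 hx with rfl | hx
      · exact hA.1
      · exact (hN x hx).1
    have hl2 : Multiset.card P ∈ LengthSet (G₀ : Set G) (A + N.sum) :=
      ⟨P, rfl, fun x hx => (hP x hx).1, hrep.symm⟩
    have hdvd := min_delta_dvd hmin.1 hl1 hl2 hlt.le
    have hle := Nat.le_of_dvd (by omega) hdvd
    refine ⟨Multiset.card P - Multiset.card N, ?_, by omega⟩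
    rw [Nat.cast_sub (by omega)]
    linarith
  have hex : ∃ k : ℕ, ∃ A, BadAtom (G₀ : Set G) A ∧ crossNumber A = k := by
    obtain ⟨k, hk, _⟩ := key A hA
    exact ⟨k, A, hA, hk⟩
  obtain ⟨A₀, hA₀, hA₀k⟩ := Nat.find_spec hex
  have hmin' : ∀ B, BadAtom (G₀ : Set G) B → ((Nat.find hex : ℕ) : ℚ) ≤ crossNumber B := by
    intro B hB
    obtain ⟨k, hk, _⟩ := key B hB
    rw [hk]
    exact_mod_cast Nat.find_min' hex ⟨B, hB, hk⟩
  have hd : ((sInf (DeltaSet (G₀ : Set G)) : ℕ) : ℚ) + 1 ≤ ((Nat.find hex : ℕ) : ℚ) := by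
    obtain ⟨k, hk, hle⟩ := key A₀ hA₀
    rw [← hA₀k, hk]
    exact_mod_cast hle
  obtain ⟨N, P, hN, hP, hrep⟩ := exists_rep hmin hcard hA₀.1.1
  exact final_contradiction hmin _ _ hmin' hd hord hA₀ hA₀k (g := h) (by simpa using hh) hN hP hrep

end RepPart

set_option linter.unusedSectionVars false

section LowerBounds

variable {G : Type*} [AddCommGroup G] [Fintype G] [DecidableEq G]

lemma bddAbove_deltaStar : BddAbove (DeltaStar G) := by
  have hfin : (Set.range (fun G₀ : Set G => sInf (DeltaSet G₀))).Finite := Set.finite_range _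
  refine (hfin.subset ?_).bddAbove
  rintro d ⟨G₀, _, rfl⟩
  exact ⟨G₀, rfl⟩

lemma le_sSup_deltaStar {G₁ : Set G} (hne : (DeltaSet G₁).Nonempty) (e : ℕ)
    (he : ∀ s ∈ DeltaSet G₁, e ≤ s) : e ≤ sSup (DeltaStar G) :=
  (he _ (Nat.sInf_mem hne)).trans (le_csSup bddAbove_deltaStar ⟨G₁, hne, rfl⟩)

/-- scaled version of the criterion for a lower bound -/
lemma le_of_mem_delta_scaled {G₀ : Set G} (f : Multiset G → ℤ) (m e : ℕ) (hm : 0 < m)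
    (hadd : ∀ A B, f (A + B) = f A + f B)
    (hf : ∀ A, IsAtomSeq G₀ A → ((m * e : ℕ) : ℤ) ∣ f A - m) {s : ℕ} (hs : s ∈ DeltaSet G₀) :
    e ≤ s := by
  obtain ⟨B, hB1, hB2, x, hx, y, hy, hxy, rfl, hz⟩ := hs
  clear hB1 hB2 hz
  have h0 : f 0 = 0 := by have := hadd 0 0; simp at this; exact this
  have key : ∀ z ∈ LengthSet G₀ B, ((m * e : ℕ) : ℤ) ∣ f B - m * z := by
    rintro z ⟨l, rfl, hl, rfl⟩
    clear hx hy
    induction l using Multiset.induction_on with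
    | empty => simp [h0]
    | cons a s ih =>
      have h1 := hf a (hl a (by simp))
      have h2 := ih (fun A hA => hl A (by simp [hA]))
      rw [Multiset.sum_cons, hadd, Multiset.card_cons]
      obtain ⟨u, hu⟩ := h1
      obtain ⟨v, hv⟩ := h2
      exact ⟨u + v, by push_cast at *; linarith⟩
  obtain ⟨u, hu⟩ := key x hx
  obtain ⟨v, hv⟩ := key y hy
  have h3 : ((m * e : ℕ) : ℤ) ∣ ((m * (y - x) : ℕ) : ℤ) := by
    refine ⟨u - v, ?_⟩
    rw [Nat.cast_mul m (y - x), Nat.cast_sub hxy.le]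
    linarith
  have h4 := Int.natCast_dvd_natCast.1 h3
  exact Nat.le_of_dvd (by omega) (Nat.dvd_of_mul_dvd_mul_left hm h4)

lemma atom_ge_replicate {G₀ : Set G} {A : Multiset G} (hA : IsAtomSeq G₀ A) {g : G}
    (h : addOrderOf g ≤ A.count g) : A = Multiset.replicate (addOrderOf g) g := by
  have h0 : Multiset.replicate (addOrderOf g) g ≠ 0 := by
    intro h0
    have := congrArg Multiset.card h0
    rw [Multiset.card_replicate, Multiset.card_zero] at this
    have := addOrderOf_pos g
    omega
  exact (hA.eq_of_le (sum_replicate_order g) h0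
    (Multiset.le_count_iff_replicate_le.1 h)).symm

lemma atom_single {G₀ : Set G} {A : Multiset G} (hA : IsAtomSeq G₀ A) {g : G}
    (h : ∀ x ∈ A, x = g) : A = Multiset.replicate (addOrderOf g) g := by
  have h1 : A = Multiset.replicate (Multiset.card A) g := Multiset.eq_replicate_card.2 h
  have h2 := hA.1.2
  rw [h1, Multiset.sum_replicate] at h2
  have h3 := addOrderOf_dvd_of_nsmul_eq_zero h2
  have h4 : 0 < Multiset.card A := Multiset.card_pos.2 hA.2.1
  apply atom_ge_replicate hA
  rw [h1, Multiset.count_replicate_self]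
  exact Nat.le_of_dvd h4 h3

lemma order_le (g : G) : addOrderOf g ≤ sSup (DeltaStar G) + 2 := by
  by_cases hm : addOrderOf g ≤ 2
  · omega
  push Not at hm
  have hgg : g ≠ -g := by
    intro h
    have : 2 • g = 0 := by rw [two_nsmul]; nth_rewrite 2 [h]; simp
    have := Nat.le_of_dvd (by norm_num) (addOrderOf_dvd_of_nsmul_eq_zero this)
    omega
  have hg0 : g ≠ 0 := by
    rintro rfl
    simp at hgg
  have hon : addOrderOf (-g) = addOrderOf g := addOrderOf_neg g
  set m := addOrderOf g with hmdef
  have hpair : IsAtomSeq ({g, -g} : Set G) ({g, -g} : Multiset G) := by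
    refine isAtomSeq_of_le ⟨by simp, by simp⟩ (by simp) ?_
    intro B hB hs h0
    by_contra hne
    have hlt := Multiset.card_lt_card (lt_of_le_of_ne hB hne)
    have hpos := Multiset.card_pos.2 h0
    simp at hlt
    obtain ⟨x, rfl⟩ := Multiset.card_eq_one.1 (by omega : Multiset.card B = 1)
    have hx := Multiset.mem_of_le hB (Multiset.mem_singleton_self x)
    simp at hx hs
    rcases hx with rfl | rfl
    · exact hg0 hs
    · exact hg0 (by simpa using hs)
  have hne : (DeltaSet ({g, -g} : Set G)).Nonempty := by
    have h1 : m ∈ LengthSet ({g, -g} : Set G) (m • ({g, -g} : Multiset G)) :=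
      ⟨Multiset.replicate m {g, -g}, by simp, fun A hA => by
        rw [Multiset.eq_of_mem_replicate hA]; exact hpair, by simp⟩
    have h2 : 2 ∈ LengthSet ({g, -g} : Set G) (m • ({g, -g} : Multiset G)) := by
      refine ⟨{Multiset.replicate m g, Multiset.replicate m (-g)}, by simp, ?_, ?_⟩
      · intro A hA
        simp at hA
        rcases hA with rfl | rfl
        · exact isAtomSeq_replicate (by simp)
        · rw [← hon]; exact isAtomSeq_replicate (by simp)
      · have : ({g, -g} : Multiset G) = {g} + {-g} := rfl
        rw [this, nsmul_add, Multiset.nsmul_singleton, Multiset.nsmul_singleton]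
        simp
    obtain ⟨e, he, _⟩ := exists_delta_le h2 h1 (by omega)
    exact ⟨e, he⟩
  have : m - 2 ≤ sSup (DeltaStar G) := by
    refine le_sSup_deltaStar hne _ fun s hs => ?_
    refine le_of_mem_delta_scaled
      (fun B => (B.count g : ℤ) + ((m : ℤ) - 1) * B.count (-g)) m (m - 2) (by omega) ?_ ?_ hs
    · intro A B
      simp only [Multiset.count_add]
      push_cast
      ring
    · intro A hA
      by_cases h1 : g ∈ A
      · by_cases h2 : -g ∈ A
        · have hle : ({g, -g} : Multiset G) ≤ A := by
            rw [Multiset.le_iff_subset (by simp [hgg])]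
            intro x hx
            simp at hx
            rcases hx with rfl | rfl <;> assumption
          have := hA.eq_of_le (by simp) (by simp) hle
          rw [← this]
          have e1 : ({g, -g} : Multiset G).count g = 1 := by
            simp [hgg]
          have e2 : ({g, -g} : Multiset G).count (-g) = 1 := by
            simp [hgg.symm]
          rw [e1, e2]
          simp
        · have := atom_single hA (g := g) fun x hx => by
            have := hA.1.1 x hx
            simp at this
            rcases this with rfl | rfl
            · rfl
            · exact absurd hx h2
          rw [this]
          rw [Multiset.count_replicate_self, Multiset.count_replicate, if_neg hgg]
          simp [← hmdef]
      · have := atom_single hA (g := -g) fun x hx => by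
            have := hA.1.1 x hx
            simp at this
            rcases this with rfl | rfl
            · exact absurd hx h1
            · rfl
        rw [this]
        rw [Multiset.count_replicate_self, Multiset.count_replicate, if_neg hgg.symm, hon,
          Nat.cast_mul, Nat.cast_sub (by omega)]
        refine ⟨1, ?_⟩
        push_cast
        ring
  omega

lemma exists_indep {p r : ℕ} (hp : p.Prime) (h : p ^ r ≤ Nat.card {x : G // p • x = 0}) :
    ∃ e : Fin r → G, (∀ i, p • e i = 0) ∧
      ∀ c : Fin r → ℤ, ∑ i, c i • e i = 0 → ∀ i, (p : ℤ) ∣ c i := by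
  have : Fact p.Prime := ⟨hp⟩
  let T : AddSubgroup G := (nsmulAddMonoidHom p : G →+ G).ker
  have hT : ∀ x : T, p • x = 0 := by
    intro x
    have := x.2
    rw [AddMonoidHom.mem_ker] at this
    exact Subtype.ext (by simpa using this)
  let _ : Module (ZMod p) T := AddCommGroup.zmodModule hT
  have hc : Nat.card {x : G // p • x = 0} = Nat.card T := by
    refine Nat.card_congr (Equiv.subtypeEquivRight fun x => ?_)
    simp [T, AddMonoidHom.mem_ker]
  have hcard : Nat.card T = p ^ Module.finrank (ZMod p) T := by
    exact (FiniteField.pow_finrank_eq_natCard p T).symm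
  rw [hc, hcard] at h
  have hr : r ≤ Module.finrank (ZMod p) T := (Nat.pow_le_pow_iff_right hp.one_lt).1 h
  let b := Module.finBasis (ZMod p) T
  have hli : LinearIndependent (ZMod p) (fun i : Fin r => b (Fin.castLE hr i)) :=
    b.linearIndependent.comp _ (Fin.castLE_injective hr)
  refine ⟨fun i => (b (Fin.castLE hr i) : G), fun i => ?_, fun c hc i => ?_⟩
  · have := congrArg Subtype.val (hT (b (Fin.castLE hr i)))
    simpa using this
  · have h1 : ∑ i, ((c i : ℤ) : ZMod p) • b (Fin.castLE hr i) = 0 := by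
      apply Subtype.ext
      simp only [Int.cast_smul_eq_zsmul]
      simpa using hc
    have h2 := Fintype.linearIndependent_iff.1 hli (fun i => ((c i : ℤ) : ZMod p)) h1 i
    exact (ZMod.intCast_zmod_eq_zero_iff_dvd _ _).1 h2

end LowerBounds

section RankBound

variable {G : Type*} [AddCommGroup G] [Fintype G] [DecidableEq G]

/-- the multiset with prescribed multiplicities -/
def wordOf {r : ℕ} (e : Fin r → G) (e₀ : G) (j : ℕ) (c : Fin r → ℕ) : Multiset G :=
  Multiset.replicate j e₀ + ∑ i, Multiset.replicate (c i) (e i)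

variable {r : ℕ} {e : Fin r → G} {e₀ : G}

lemma wordOf_count_zero (h0 : ∀ i, e i ≠ e₀) (j : ℕ) (c : Fin r → ℕ) :
    (wordOf e e₀ j c).count e₀ = j := by
  unfold wordOf
  rw [Multiset.count_add, Multiset.count_sum']
  simp [Multiset.count_replicate, h0]

lemma wordOf_count (hinj : Function.Injective e) (h0 : ∀ i, e i ≠ e₀) (j : ℕ) (c : Fin r → ℕ)
    (i : Fin r) : (wordOf e e₀ j c).count (e i) = c i := by
  unfold wordOf
  rw [Multiset.count_add, Multiset.count_sum']
  simp [Multiset.count_replicate, (h0 i).symm, hinj.eq_iff]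

lemma mem_wordOf {j : ℕ} {c : Fin r → ℕ} {x : G} (hx : x ∈ wordOf e e₀ j c) :
    x = e₀ ∨ ∃ i, x = e i := by
  unfold wordOf at hx
  rcases Multiset.mem_add.1 hx with h | h
  · exact Or.inl (Multiset.eq_of_mem_replicate h)
  · obtain ⟨i, _, h⟩ := Multiset.mem_sum.1 h
    exact Or.inr ⟨i, Multiset.eq_of_mem_replicate h⟩

lemma eq_wordOf (hinj : Function.Injective e) (h0 : ∀ i, e i ≠ e₀) {B : Multiset G}
    (hB : ∀ x ∈ B, x = e₀ ∨ ∃ i, x = e i) :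
    B = wordOf e e₀ (B.count e₀) (fun i => B.count (e i)) := by
  ext x
  by_cases hx : x = e₀ ∨ ∃ i, x = e i
  · rcases hx with rfl | ⟨i, rfl⟩
    · rw [wordOf_count_zero h0]
    · rw [wordOf_count hinj h0]
  · rw [Multiset.count_eq_zero_of_notMem fun h => hx (hB x h),
      Multiset.count_eq_zero_of_notMem fun h => hx (mem_wordOf h)]

lemma wordOf_sum (he : e₀ = ∑ i, e i) (j : ℕ) (c : Fin r → ℕ) :
    (wordOf e e₀ j c).sum = ∑ i, ((c i + j : ℕ) : ℤ) • e i := by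
  unfold wordOf
  rw [Multiset.sum_add, Multiset.sum_replicate, ← Multiset.coe_sumAddMonoidHom, map_sum, he,
    Finset.smul_sum, ← Finset.sum_add_distrib]
  refine Finset.sum_congr rfl fun i _ => ?_
  rw [natCast_zsmul, add_nsmul, Multiset.coe_sumAddMonoidHom, Multiset.sum_replicate, add_comm]

lemma wordOf_mono {j j' : ℕ} {c c' : Fin r → ℕ} (hj : j ≤ j') (hc : ∀ i, c i ≤ c' i) :
    wordOf e e₀ j c ≤ wordOf e e₀ j' c' := by
  unfold wordOf
  refine add_le_add (Multiset.replicate_le_replicate e₀ |>.2 hj) ?_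
  exact Finset.sum_le_sum fun i _ => (Multiset.replicate_le_replicate (e i)).2 (hc i)

lemma rankG_le_deltaStar : rankG G ≤ sSup (DeltaStar G) + 1 := by
  by_cases hr2 : rankG G ≤ 1
  · omega
  push Not at hr2
  obtain ⟨p, hp, hr⟩ : rankG G ∈ {r : ℕ | ∃ p : ℕ, p.Prime ∧ r = pRank G p} :=
    Nat.sSup_mem ⟨_, 2, Nat.prime_two, rfl⟩ bddAbove_pRank
  generalize rankG G = r at *
  have hpow : p ^ r ≤ Nat.card {x : G // p • x = 0} := by
    rw [hr]
    have : Nonempty {x : G // p • x = 0} := ⟨⟨0, by simp⟩⟩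
    exact Nat.pow_log_le_self p Nat.card_pos.ne'
  obtain ⟨e, hpe, hind⟩ := exists_indep hp hpow
  obtain ⟨e₀, he₀⟩ : ∃ e₀, e₀ = ∑ i, e i := ⟨_, rfl⟩
  have hp1 : ¬ (p : ℤ) ∣ 1 := by
    intro h
    have : (p : ℤ) ∣ ((1 : ℕ) : ℤ) := by simpa using h
    exact hp.one_lt.ne' (Nat.dvd_one.1 (Int.natCast_dvd_natCast.1 this))
  have hsingle : ∀ k, ∑ i, (Pi.single k (1 : ℤ) : Fin r → ℤ) i • e i = e k := by
    intro k
    rw [Finset.sum_eq_single k]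
    · simp
    · intro i _ hi
      simp [hi]
    · simp
  have hne0 : ∀ k, e k ≠ 0 := by
    intro k hk
    have := hind (Pi.single k 1) (by rw [hsingle, hk]) k
    rw [Pi.single_eq_same] at this
    exact hp1 this
  have hinj : Function.Injective e := by
    intro k l hkl
    by_contra hne
    have := hind (Pi.single k 1 - Pi.single l 1) (by
      simp only [Pi.sub_apply, sub_smul, Finset.sum_sub_distrib]
      rw [hsingle, hsingle, hkl, sub_self]) k
    simp [hne] at this
    exact hp1 (by simpa using this)
  have h0 : ∀ i, e i ≠ e₀ := by
    intro k hk
    obtain ⟨l, hl⟩ : ∃ l : Fin r, l ≠ k := by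
      have : Nontrivial (Fin r) := Fin.nontrivial_iff_two_le.2 (by omega)
      exact exists_ne k
    have := hind (fun i => 1 - (Pi.single k (1 : ℤ) : Fin r → ℤ) i) (by
      simp only [sub_smul, Finset.sum_sub_distrib, one_smul]
      rw [hsingle, ← he₀, hk, sub_self]) l
    simp [hl] at this
    exact hp1 (by simpa using this)
  have hpe0 : p • e₀ = 0 := by
    rw [he₀, Finset.smul_sum]
    simp [hpe]
  have he0ne : e₀ ≠ 0 := by
    intro h
    have := hind (fun _ => 1) (by simp [← he₀, h]) ⟨0, by omega⟩
    exact hp1 this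
  have hop : ∀ i, addOrderOf (e i) = p := fun i => addOrderOf_eq_prime (hp := ⟨hp⟩) (hpe i) (hne0 i)
  have hop0 : addOrderOf e₀ = p := addOrderOf_eq_prime (hp := ⟨hp⟩) hpe0 he0ne
  let G₁ : Set G := {x | x = e₀ ∨ ∃ i, x = e i}
  have hword : ∀ B : Multiset G, (∀ x ∈ B, x ∈ G₁) →
      B = wordOf e e₀ (B.count e₀) (fun i => B.count (e i)) := fun B hB => eq_wordOf hinj h0 hB
  have hdvd : ∀ B : Multiset G, (∀ x ∈ B, x ∈ G₁) → B.sum = 0 →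
      ∀ i, p ∣ B.count (e i) + B.count e₀ := by
    intro B hB hs i
    rw [hword B hB, wordOf_sum he₀] at hs
    have := hind _ hs i
    exact Int.natCast_dvd_natCast.1 this
  have hzero : ∀ (j : ℕ) (c : Fin r → ℕ), (∀ i, p ∣ c i + j) → (wordOf e e₀ j c).sum = 0 := by
    intro j c hjc
    rw [wordOf_sum he₀]
    refine Finset.sum_eq_zero fun i _ => ?_
    obtain ⟨q, hq⟩ := hjc i
    rw [hq, natCast_zsmul, mul_comm, mul_nsmul', hpe, nsmul_zero]
  have hp2 := hp.two_le
  -- the special atom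
  have hU : IsAtomSeq G₁ (wordOf e e₀ (p - 1) (fun _ => 1)) := by
    refine isAtomSeq_of_le ⟨fun x hx => mem_wordOf hx, hzero _ _ fun i => ?_⟩ ?_ ?_
    · have : 1 + (p - 1) = p := by omega
      rw [this]
    · intro h
      have h1 := congrArg (Multiset.count e₀) h
      rw [wordOf_count_zero h0, Multiset.count_zero] at h1
      omega
    · intro B hB hs hB0
      have hBm : ∀ x ∈ B, x ∈ G₁ := fun x hx => mem_wordOf (Multiset.mem_of_le hB hx)
      have h1 := Multiset.le_iff_count.1 hB e₀
      rw [wordOf_count_zero h0] at h1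
      have h2 : ∀ i, B.count (e i) ≤ 1 := fun i => by
        have := Multiset.le_iff_count.1 hB (e i)
        rwa [wordOf_count hinj h0] at this
      have h3 := hdvd B hBm hs
      have hcount0 : B.count e₀ ≠ 0 := by
        intro hz
        apply hB0
        have : ∀ i, B.count (e i) = 0 := by
          intro i
          have h4 := h3 i
          rw [hz, add_zero] at h4
          rcases Nat.eq_zero_or_pos (B.count (e i)) with h | h
          · exact h
          · have := Nat.le_of_dvd h h4
            have := h2 i
            omega
        rw [Multiset.eq_zero_iff_forall_notMem]
        intro x hx
        rcases hBm x hx with rfl | ⟨i, rfl⟩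
        · exact absurd hz (Multiset.count_pos.2 hx).ne'
        · exact absurd (this i) (Multiset.count_pos.2 hx).ne'
      have h4 : ∀ i, B.count (e i) = 1 ∧ B.count e₀ = p - 1 := by
        intro i
        have h5 := Nat.le_of_dvd (by omega) (h3 i)
        have := h2 i
        omega
      rw [hword B hBm, (h4 ⟨0, by omega⟩).2]
      congr 1
      funext i
      exact (h4 i).1
  have hne : (DeltaSet G₁).Nonempty := by
    have h1 : p ∈ LengthSet G₁ (p • wordOf e e₀ (p - 1) (fun _ => 1)) :=
      ⟨Multiset.replicate p (wordOf e e₀ (p - 1) (fun _ => 1)), by simp, fun A hA => by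
        rw [Multiset.eq_of_mem_replicate hA]; exact hU, by simp⟩
    have h2 : p - 1 + r ∈ LengthSet G₁ (p • wordOf e e₀ (p - 1) (fun _ => 1)) := by
      refine ⟨Multiset.replicate (p - 1) (Multiset.replicate p e₀) +
        ∑ i, {Multiset.replicate p (e i)}, ?_, ?_, ?_⟩
      · simp [Multiset.card_sum]
      · intro A hA
        rcases Multiset.mem_add.1 hA with h | h
        · rw [Multiset.eq_of_mem_replicate h, ← hop0]
          exact isAtomSeq_replicate (Or.inl rfl)
        · obtain ⟨i, _, h⟩ := Multiset.mem_sum.1 h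
          rw [Multiset.mem_singleton.1 h]
          nth_rewrite 1 [← hop i]
          exact isAtomSeq_replicate (Or.inr ⟨i, rfl⟩)
      · unfold wordOf
        rw [Multiset.sum_add, nsmul_add, Finset.smul_sum]
        congr 1
        · rw [Multiset.sum_replicate, Multiset.nsmul_replicate, Multiset.nsmul_replicate, mul_comm]
        · rw [← Multiset.coe_sumAddMonoidHom, map_sum]
          refine Finset.sum_congr rfl fun i _ => ?_
          simp [Multiset.nsmul_singleton]
    obtain ⟨s, hs, _⟩ := exists_delta_le h1 h2 (by omega)
    exact ⟨s, hs⟩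
  have : r - 1 ≤ sSup (DeltaStar G) := by
    refine le_sSup_deltaStar hne _ fun s hs => ?_
    refine le_of_mem_delta_scaled
      (fun B => (∑ i, (B.count (e i) : ℤ)) + (r : ℤ) * B.count e₀) p (r - 1) hp.pos ?_ ?_ hs
    · intro A B
      simp only [Multiset.count_add]
      push_cast
      rw [Finset.sum_add_distrib]
      ring
    · intro A hA
      have hAd := hdvd A hA.1.1 hA.1.2
      have hcast : ((p * (r - 1) : ℕ) : ℤ) = p * ((r : ℤ) - 1) := by
        rw [Nat.cast_mul, Nat.cast_sub (by omega)]; simp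
      rw [hcast]
      by_cases hj0 : A.count e₀ = 0
      · obtain ⟨x, hx⟩ := Multiset.exists_mem_of_ne_zero hA.2.1
        have hpos := Multiset.count_pos.2 hx
        rcases hA.1.1 x hx with rfl | ⟨k, rfl⟩
        · omega
        · have h1 := hAd k
          rw [hj0, add_zero] at h1
          have h2 := atom_ge_replicate hA (g := e k) (by
            rw [hop]; exact Nat.le_of_dvd hpos h1)
          rw [h2, hop]
          simp [Multiset.count_replicate, hinj.eq_iff, h0]
      · by_cases hjp : p ≤ A.count e₀
        · have h2 := atom_ge_replicate hA (g := e₀) (by rw [hop0]; exact hjp)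
          rw [h2, hop0]
          refine ⟨1, ?_⟩
          simp [Multiset.count_replicate, fun i => (h0 i).symm]
          ring
        · set j := A.count e₀ with hj
          have hle : wordOf e e₀ j (fun _ => p - j) ≤ A := by
            rw [hword A hA.1.1]
            refine wordOf_mono le_rfl fun i => ?_
            have := Nat.le_of_dvd (by omega) (hAd i)
            omega
          have h2 := hA.eq_of_le (hzero _ _ fun i => by
            rw [Nat.sub_add_cancel (by omega)]) (by
              intro h
              have h1 := congrArg (Multiset.count e₀) h
              rw [wordOf_count_zero h0, Multiset.count_zero] at h1
              omega) hle
          refine ⟨1, ?_⟩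
          have h3 : ∀ i, A.count (e i) = p - j := fun i => by
            rw [← h2, wordOf_count hinj h0]
          simp only [h3]
          rw [Finset.sum_const, Finset.card_univ, Fintype.card_fin, Nat.cast_sub (by omega)]
          simp only [nsmul_eq_mul]
          ring
  omega

end RankBound
/-- If `G₀` is a minimal non-half-factorial LCN-set with
`min Δ(G₀) = max Δ*(G)` and `S = ∏_{g ∈ G₀} g^{ord(g)}`, then every atom `A` over `G₀`
with `k(A) > 1` satisfies `k(A) < r(G)`, and `S − A` is again an atom over `G₀`. -/
theorem stmt_14 {G : Type*} [AddCommGroup G] [Fintype G] [DecidableEq G] (G₀ : Finset G)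
    (hmin : IsMinNonHalfFactorial (↑G₀ : Set G)) (hLCN : IsLCNSet (↑G₀ : Set G))
    (hmax : sInf (DeltaSet (↑G₀ : Set G)) = sSup (DeltaStar G))
    (S : Multiset G) (hS : S = ∑ g ∈ G₀, Multiset.replicate (addOrderOf g) g) :
    ∀ A : Multiset G, IsAtomSeq (↑G₀ : Set G) A → 1 < crossNumber A →
      crossNumber A < (rankG G : ℚ) ∧ IsAtomSeq (↑G₀ : Set G) (S - A) := by
  intro A hA hkA
  have hbad : BadAtom (G₀ : Set G) A := ⟨hA, hkA.ne'⟩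
  have hord : ∀ g ∈ (G₀ : Set G), addOrderOf g ≤ sInf (DeltaSet (G₀ : Set G)) + 2 := by
    intro g _
    rw [hmax]
    exact order_le g
  have hrd : rankG G ≤ sInf (DeltaSet (G₀ : Set G)) + 1 := by
    rw [hmax]
    exact rankG_le_deltaStar
  have hn : G₀.card ≤ rankG G + 1 := by
    by_contra hcon
    exact no_bad_of_large hmin hLCN (by omega) hord hbad
  have hcount : ∀ g ∈ G₀, S.count g = addOrderOf g := by
    intro g hg
    rw [hS, Multiset.count_sum']
    simp [Multiset.count_replicate, hg]
  have hle : A ≤ S := by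
    rw [Multiset.le_iff_count]
    intro g
    by_cases hg : g ∈ G₀
    · rw [hcount g hg]
      exact hbad.count_lt.le
    · rw [Multiset.count_eq_zero_of_notMem fun h => hg (by simpa using hA.1.1 g h)]
      omega
  have hSl : G₀.card ∈ LengthSet (G₀ : Set G) S := by
    refine ⟨G₀.val.map fun g => Multiset.replicate (addOrderOf g) g, by simp, ?_, ?_⟩
    · intro B hB
      rw [Multiset.mem_map] at hB
      obtain ⟨g, hg, rfl⟩ := hB
      exact isAtomSeq_replicate (by simpa using hg)
    · rw [hS]; rfl
  have hkS : crossNumber S = G₀.card := by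
    have : S = (G₀.val.map fun g => Multiset.replicate (addOrderOf g) g).sum := by rw [hS]; rfl
    rw [this, crossNumber_sum_of_one]
    · simp
    · intro B hB
      rw [Multiset.mem_map] at hB
      obtain ⟨g, _, rfl⟩ := hB
      exact crossNumber_replicate_order g
  have hSz := lengthSet_zeroSum hSl
  have hAV : S = A + (S - A) := (add_tsub_cancel_of_le hle).symm
  obtain ⟨V, hV⟩ : ∃ V, V = S - A := ⟨_, rfl⟩
  rw [← hV] at hAV ⊢
  have hVz : IsZeroSumSeq (G₀ : Set G) V := hSz.right hA.1.2 hAV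
  have hkV : crossNumber A + crossNumber V = G₀.card := by
    rw [← crossNumber_add, ← hAV, hkS]
  obtain ⟨l, hl, hls⟩ := exists_factorization V hVz
  have hlk := card_le_crossNumber_sum l fun B hB => hLCN B (hl B hB)
  rw [hls] at hlk
  have hlt : Multiset.card l + 1 < G₀.card := by
    have : (Multiset.card l : ℚ) + 1 < G₀.card := by linarith
    exact_mod_cast this
  have hl1 : Multiset.card l + 1 ∈ LengthSet (G₀ : Set G) S := by
    refine ⟨A ::ₘ l, by simp, ?_, by rw [Multiset.sum_cons, hls, ← hAV]⟩
    intro x hx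
    rcases Multiset.mem_cons.1 hx with rfl | hx
    · exact hA
    · exact hl x hx
  have hd := Nat.le_of_dvd (by omega) (min_delta_dvd hmin.1 hl1 hSl hlt.le)
  have hVcount : ∀ g ∈ G₀, g ∈ V := by
    intro g hg
    have h1 := hcount g hg
    rw [hAV, Multiset.count_add] at h1
    have h2 : A.count g < addOrderOf g := hbad.count_lt
    exact Multiset.count_pos.1 (by omega)
  have hl0 : Multiset.card l ≠ 0 := by
    intro h0
    rw [Multiset.card_eq_zero] at h0
    rw [h0, Multiset.sum_zero] at hls
    obtain ⟨g, hg⟩ : G₀.Nonempty := Finset.card_pos.1 (by omega)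
    have := hVcount g hg
    rw [← hls] at this
    simp at this
  have hlone : Multiset.card l = 1 := by omega
  have hVat : IsAtomSeq (G₀ : Set G) V := by
    obtain ⟨W, rfl⟩ := Multiset.card_eq_one.1 hlone
    rw [Multiset.sum_singleton] at hls
    rw [← hls]
    exact hl W (by simp)
  refine ⟨?_, hVat⟩
  by_contra hcon
  push Not at hcon
  have hV1 := hLCN V hVat
  have hnq : (G₀.card : ℚ) ≤ rankG G + 1 := by exact_mod_cast hn
  have hVk : KOne (G₀ : Set G) V := ⟨hVat, by linarith⟩
  have hcard := hVk.card_le _ hord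
  have hG₀V : G₀.val < V := by
    refine lt_of_le_of_ne ((Multiset.le_iff_subset G₀.nodup).2 fun g hg => hVcount g hg) ?_
    intro heq
    have hleA : V ≤ A := by
      rw [← heq, Multiset.le_iff_subset G₀.nodup]
      intro g hg
      exact hbad.mem hmin (by simpa using hg)
    have := hA.eq_of_le hVat.1.2 hVat.2.1 hleA
    rw [← this, hVk.2] at hkA
    exact lt_irrefl _ hkA
  have := Multiset.card_lt_card hG₀V
  rw [Finset.card_val] at this
  omega
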